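/- A diamond-free bimodal formula φ in negation normal form is DF⊕⊆KF-satisfiable if and only if it is satisfiable in a model over a frame for DF⊕⊆KF having at most two worlds. -/

import Mathlib

/-!
Call a world `v` reflexive-like for `φ` if `□_i ψ` at `v` implies `ψ` at `v` for every subformula
`□_i ψ` of `φ` (`BoxReflexive`). Since `R 0` is serial and transitive, every world `w` has an
`R 0`-successor of this kind: following `R 0`, either `□_i ψ` becomes true at some point, and
then `ψ` holds at all later points because `R 0 ⊆ R i`, or it never becomes true later on and the
condition is vacuous (`exists_forall_boxReflexive`).

Given such a `v`, keep only `w` and `v`, and let `v` be the unique successor of both worlds under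
both relations. Every diamond-free formula true at `w` (or `v`) stays true in this model, since
boxes at `w` are inherited because `w` sees `v` in the original model, and boxes at `v` by the
choice of `v` (`sat_twoWorld`).
-/

/-- Multimodal formulas in negation normal form over modality index type `I`
and propositional-variable type `P`. -/
inductive MF (I : Type) (P : Type) : Type where
  | var  : P → MF I P
  | nvar : P → MF I P
  | bot  : MF I P
  | top  : MF I P
  | and  : MF I P → MF I P → MF I P
  | or   : MF I P → MF I P → MF I P
  | box  : I → MF I P → MF I P
  | dia  : I → MF I P → MF I P

/-- Truth of a formula at a world of a Kripke model `(W, R, V)`. -/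
def Sat {I P W : Type} (R : I → W → W → Prop) (V : P → Set W) : W → MF I P → Prop
  | w, .var p  => w ∈ V p
  | w, .nvar p => w ∉ V p
  | _, .bot    => False
  | _, .top    => True
  | w, .and φ ψ => Sat R V w φ ∧ Sat R V w ψ
  | w, .or φ ψ  => Sat R V w φ ∨ Sat R V w ψ
  | w, .box i φ => ∀ v, R i w v → Sat R V v φ
  | w, .dia i φ => ∃ v, R i w v ∧ Sat R V v φ

/-- A formula is diamond-free if it contains no diamond operators. -/
def DiamondFree {I P : Type} : MF I P → Prop
  | .var _ | .nvar _ | .bot | .top => True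
  | .and φ ψ | .or φ ψ => DiamondFree φ ∧ DiamondFree ψ
  | .box _ φ => DiamondFree φ
  | .dia _ _ => False

/-- A relation is serial if every point has a successor. -/
def Serial {W : Type} (R : W → W → Prop) : Prop := ∀ w, ∃ v, R w v

/-- `DF⊕⊆KF`-satisfiability: `R 0` serial and transitive, `R 0 ⊆ R 1`,
`R 1` transitive. -/
def DFKFSat (φ : MF (Fin 2) ℕ) : Prop :=
  ∃ (W : Type) (R : Fin 2 → W → W → Prop) (V : ℕ → Set W) (w : W),
    Serial (R 0) ∧ Transitive (R 0) ∧ (∀ a b, R 0 a b → R 1 a b) ∧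
    Transitive (R 1) ∧ Sat R V w φ

/-- Every subformula `□_i ψ` of the given diamond-free formula satisfies `□_i ψ → ψ` at the
world `v`. Diamonds are not inspected. -/
def BoxReflexive {I P W : Type} (R : I → W → W → Prop) (V : P → Set W) (v : W) : MF I P → Prop
  | .and φ ψ | .or φ ψ => BoxReflexive R V v φ ∧ BoxReflexive R V v ψ
  | .box i φ => (Sat R V v (.box i φ) → Sat R V v φ) ∧ BoxReflexive R V v φ
  | _ => True

/-- If `P` and `Q` both hold eventually along a transitive relation, starting from any world,
then so does their conjunction. -/
theorem eventually_and {W : Type} {R : W → W → Prop} (ht : Transitive R) {P Q : W → Prop}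
    (hP : ∀ w, ∃ v, R w v ∧ ∀ v', R v v' → P v') (hQ : ∀ w, ∃ v, R w v ∧ ∀ v', R v v' → Q v')
    (w : W) : ∃ v, R w v ∧ ∀ v', R v v' → P v' ∧ Q v' := by
  obtain ⟨v, hwv, hv⟩ := hP w
  obtain ⟨u, hvu, hu⟩ := hQ v
  exact ⟨u, ht hwv hvu, fun v' h => ⟨hv v' (ht hvu h), hu v' h⟩⟩

theorem exists_forall_boxReflexive {W : Type} {R : Fin 2 → W → W → Prop} {V : ℕ → Set W}
    (hs : Serial (R 0)) (ht : Transitive (R 0)) (hsub : ∀ a b, R 0 a b → R 1 a b)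
    (φ : MF (Fin 2) ℕ) (w : W) :
    ∃ v, R 0 w v ∧ ∀ v', R 0 v v' → BoxReflexive R V v' φ := by
  have trivial_case : ∀ w : W, ∃ v, R 0 w v ∧ ∀ v', R 0 v v' → True := fun w =>
    (hs w).imp fun _ h => ⟨h, fun _ _ => trivial⟩
  induction φ generalizing w with
  | var | nvar | bot | top | dia => exact trivial_case w
  | and φ ψ ihφ ihψ => exact eventually_and ht ihφ ihψ w
  | or φ ψ ihφ ihψ => exact eventually_and ht ihφ ihψ w
  | box i φ ih =>
    refine eventually_and ht (fun w => ?_) ih w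
    have hsub' : ∀ a b, R 0 a b → R i a b := by
      intro a b h
      fin_cases i
      · exact h
      · exact hsub a b h
    by_cases h : ∃ v, R 0 w v ∧ Sat R V v (.box i φ)
    · obtain ⟨v, hwv, hv⟩ := h
      exact ⟨v, hwv, fun v' hv' _ => hv v' (hsub' _ _ hv')⟩
    · obtain ⟨v, hwv⟩ := hs w
      exact ⟨v, hwv, fun v' hv' hbox => (h ⟨v', ht hwv hv', hbox⟩).elim⟩

/-- Transfer of diamond-free formulas to the two-world model: `true` stands for `v`, `false`
for `w`, and `true` is the only successor of either world. -/
theorem sat_twoWorld {I P W : Type} {R : I → W → W → Prop} {V : P → Set W} {w v : W}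
    (hwv : ∀ i, R i w v) (φ : MF I P) (hdf : DiamondFree φ) (hv : BoxReflexive R V v φ) (b : Bool)
    (h : Sat R V (cond b v w) φ) :
    Sat (fun (_ : I) (_ c : Bool) => c = true) (fun p => {c | cond c v w ∈ V p}) b φ := by
  induction φ generalizing b with
  | var | nvar | bot | top => exact h
  | and φ ψ ihφ ihψ => exact ⟨ihφ hdf.1 hv.1 b h.1, ihψ hdf.2 hv.2 b h.2⟩
  | or φ ψ ihφ ihψ => exact h.imp (ihφ hdf.1 hv.1 b) (ihψ hdf.2 hv.2 b)
  | box i φ ih =>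
    rintro _ rfl
    refine ih hdf hv.2 true ?_
    cases b
    · exact h v (hwv i)
    · exact hv.1 h
  | dia => exact hdf.elim

/-- A diamond-free bimodal NNF formula is DF⊕⊆KF-satisfiable iff
it is satisfiable in a model over a DF⊕⊆KF frame with at most two worlds. -/
theorem stmt_11 (φ : MF (Fin 2) ℕ) (hdf : DiamondFree φ) :
    DFKFSat φ ↔
      ∃ (W : Type) (R : Fin 2 → W → W → Prop) (V : ℕ → Set W) (w : W),
        (∃ u v : W, ∀ t : W, t = u ∨ t = v) ∧
        Serial (R 0) ∧ Transitive (R 0) ∧ (∀ a b, R 0 a b → R 1 a b) ∧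
        Transitive (R 1) ∧ Sat R V w φ := by
  constructor
  · rintro ⟨W, R, V, w, hs, ht, hsub, -, hw⟩
    obtain ⟨u, hwu, hu⟩ := exists_forall_boxReflexive (V := V) hs ht hsub φ w
    obtain ⟨v, huv⟩ := hs u
    have hwv : R 0 w v := ht hwu huv
    have hwv' : ∀ i, R i w v := by
      intro i
      fin_cases i
      · exact hwv
      · exact hsub _ _ hwv
    exact ⟨Bool, fun _ _ c => c = true, fun p => {c | cond c v w ∈ V p}, false,
      ⟨true, false, by decide⟩, fun _ => ⟨true, rfl⟩, fun _ _ _ _ h => h, fun _ _ h => h,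
      fun _ _ _ _ h => h, sat_twoWorld hwv' φ hdf (hu v huv) false hw⟩
  · rintro ⟨W, R, V, w, -, h⟩
    exact ⟨W, R, V, w, h⟩
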